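/- arXiv:1409.6445 — 2 statements merged into one kernel-verified Lean document; each statement's English description precedes it below -/
import Mathlib

section
/- Let N ≥ 2 and let A be an N×N real matrix with nonnegative off-diagonal entries which is irreducible. Then for every t > 0: (a) every entry of the matrix exponential exp(tA) is strictly positive, and (b) the spectral radius of exp(tA) equals e^{t·s(A)}, where s(A) := max{Re γ : γ is a (complex) eigenvalue of A}. -/
/-- Irreducibility: any two distinct indices are connected by a finite chain of
strictly positive entries. -/
def MatrixIrreducible {N : ℕ} (A : Matrix (Fin N) (Fin N) ℝ) : Prop :=
  ∀ i j : Fin N, i ≠ j → ∃ (k : ℕ) (c : ℕ → Fin N),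
    c 0 = i ∧ c k = j ∧ ∀ l < k, 0 < A (c l) (c (l + 1))

/-- The matrix exponential `exp M = ∑ₖ Mᵏ/k!`. -/
noncomputable def matExp {N : ℕ} (M : Matrix (Fin N) (Fin N) ℝ) :
    Matrix (Fin N) (Fin N) ℝ :=
  ∑' k : ℕ, ((k.factorial : ℝ)⁻¹) • M ^ k

/-- The set of real parts of the (complex) eigenvalues of a real matrix. -/
def spectrumRe {N : ℕ} (M : Matrix (Fin N) (Fin N) ℝ) : Set ℝ :=
  {x : ℝ | ∃ γ ∈ spectrum ℂ (M.map Complex.ofReal), γ.re = x}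

/-- The set of moduli of the (complex) eigenvalues of a real matrix. -/
def spectrumAbs {N : ℕ} (M : Matrix (Fin N) (Fin N) ℝ) : Set ℝ :=
  {x : ℝ | ∃ γ ∈ spectrum ℂ (M.map Complex.ofReal), ‖γ‖ = x}

open NormedSpace in
theorem matExp_eq_exp {N : ℕ} (M : Matrix (Fin N) (Fin N) ℝ) : matExp M = exp M := by
  rw [NormedSpace.exp_eq_tsum ℝ]; rfl

attribute [local instance] Matrix.linftyOpNormedRing Matrix.linftyOpNormedAlgebra in
theorem exp_mulVec_eigen {N : ℕ} (B : Matrix (Fin N) (Fin N) ℂ) (v : Fin N → ℂ) (γ : ℂ)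
    (h : B.mulVec v = γ • v) : (NormedSpace.exp B).mulVec v = Complex.exp γ • v := by
  have hpow : ∀ k : ℕ, (B ^ k).mulVec v = γ ^ k • v := by
    intro k
    induction k with
    | zero => simp
    | succ k ih => rw [pow_succ, ← Matrix.mulVec_mulVec, h, Matrix.mulVec_smul, ih, smul_smul,
        pow_succ, mul_comm]
  have h1 := NormedSpace.exp_series_hasSum_exp' (𝕂 := ℂ) B
  have h2 := NormedSpace.exp_series_hasSum_exp' (𝕂 := ℂ) γ
  have hc : Continuous fun M : Matrix (Fin N) (Fin N) ℂ => M.mulVec v := by fun_prop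
  have h3 := h1.map (Matrix.mulVecBilin ℂ ℂ |>.flip v) hc
  have h4 := h2.smul_const v
  rw [Complex.exp_eq_exp_ℂ]
  refine h3.unique ?_
  convert h4 using 1
  ext k : 1
  simp [hpow, smul_smul]

attribute [local instance] Matrix.linftyOpNormedRing Matrix.linftyOpNormedAlgebra in
theorem spectrum_exp_matrix {N : ℕ} (B : Matrix (Fin N) (Fin N) ℂ) (μ : ℂ) :
    μ ∈ spectrum ℂ (NormedSpace.exp B) ↔ ∃ γ ∈ spectrum ℂ B, Complex.exp γ = μ := by
  constructor
  · intro h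
    rw [← Matrix.spectrum_toLin', ← Module.End.hasEigenvalue_iff_mem_spectrum] at h
    set E := Module.End.eigenspace (Matrix.toLin' (NormedSpace.exp B)) μ with hE
    have hcomm : Commute (NormedSpace.exp B) B := (Commute.refl B).exp_left
    have hinv : ∀ x ∈ E, Matrix.toLin' B x ∈ E := by
      intro x hx
      rw [hE, Module.End.mem_eigenspace_iff] at hx ⊢
      simp only [Matrix.toLin'_apply] at hx ⊢
      rw [Matrix.mulVec_mulVec, hcomm.eq, ← Matrix.mulVec_mulVec, hx, Matrix.mulVec_smul]
    have : Nontrivial E := Submodule.nontrivial_iff_ne_bot.mpr h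
    obtain ⟨γ, hγ⟩ := Module.End.exists_eigenvalue ((Matrix.toLin' B).restrict hinv)
    obtain ⟨v, hv⟩ := hγ.exists_hasEigenvector
    have hv1 : B.mulVec (v : Fin N → ℂ) = γ • (v : Fin N → ℂ) := by
      have := congrArg Subtype.val hv.apply_eq_smul
      simpa using this
    have hv0 : (v : Fin N → ℂ) ≠ 0 := by simpa using hv.2
    refine ⟨γ, ?_, ?_⟩
    · rw [← Matrix.spectrum_toLin', ← Module.End.hasEigenvalue_iff_mem_spectrum]
      exact Module.End.hasEigenvalue_of_hasEigenvector (x := (v : Fin N → ℂ))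
        ⟨Module.End.mem_eigenspace_iff.2 (by simpa using hv1), hv0⟩
    · have h5 := exp_mulVec_eigen B _ γ hv1
      have h6 := Module.End.mem_eigenspace_iff.1 v.2
      rw [Matrix.toLin'_apply, h5] at h6
      exact smul_left_injective ℂ hv0 h6
  · rintro ⟨γ, hγ, rfl⟩
    rw [Complex.exp_eq_exp_ℂ]
    exact spectrum.exp_mem_exp B hγ

attribute [local instance] Matrix.linftyOpNormedRing Matrix.linftyOpNormedAlgebra in
theorem matExp_map {N : ℕ} (M : Matrix (Fin N) (Fin N) ℝ) :
    (matExp M).map Complex.ofReal = NormedSpace.exp (M.map Complex.ofReal) := by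
  rw [matExp_eq_exp]
  refine NormedSpace.map_exp (Complex.ofRealHom.mapMatrix (m := Fin N)) ?_ M
  exact continuous_id.matrix_map Complex.continuous_ofReal

attribute [local instance] Matrix.linftyOpNormedRing Matrix.linftyOpNormedAlgebra in
theorem exp_ge_term {N : ℕ} (B : Matrix (Fin N) (Fin N) ℝ) (hB : ∀ i j, 0 ≤ B i j)
    (i j : Fin N) (k : ℕ) (hk : 0 < (B ^ k) i j) : 0 < NormedSpace.exp B i j := by
  have hp : ∀ k : ℕ, ∀ i j, 0 ≤ (B ^ k) i j := by
    intro k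
    induction k with
    | zero => intro i j; rw [pow_zero, Matrix.one_apply]; split_ifs <;> simp
    | succ k ih =>
      intro i j
      rw [pow_succ, Matrix.mul_apply]
      exact Finset.sum_nonneg fun l _ => mul_nonneg (ih _ _) (hB _ _)
  have h1 := NormedSpace.exp_series_hasSum_exp' (𝕂 := ℝ) B
  have hc : Continuous fun M : Matrix (Fin N) (Fin N) ℝ => M i j := by fun_prop
  have h3 := h1.map (Matrix.entryAddMonoidHom ℝ i j) hc
  have h4 := le_hasSum h3 k (fun l _ => by
    simp only [Function.comp, Matrix.entryAddMonoidHom_apply, Matrix.smul_apply, smul_eq_mul]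
    have := hp l i j
    positivity)
  refine lt_of_lt_of_le ?_ h4
  simp only [Function.comp, Matrix.entryAddMonoidHom_apply, Matrix.smul_apply, smul_eq_mul]
  positivity

theorem chain_pow_pos {N : ℕ} (B : Matrix (Fin N) (Fin N) ℝ) (hB : ∀ i j, 0 ≤ B i j)
    (c : ℕ → Fin N) (k : ℕ) (h : ∀ l < k, 0 < B (c l) (c (l + 1))) :
    (∀ i j, 0 ≤ (B ^ k) i j) ∧ 0 < (B ^ k) (c 0) (c k) := by
  induction k with
  | zero =>
    refine ⟨fun i j => ?_, by simp⟩
    rw [pow_zero, Matrix.one_apply]; split_ifs <;> simp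
  | succ k ih =>
    obtain ⟨h1, h2⟩ := ih fun l hl => h l (by omega)
    simp only [pow_succ, Matrix.mul_apply]
    refine ⟨fun i j => Finset.sum_nonneg fun l _ => mul_nonneg (h1 _ _) (hB _ _), ?_⟩
    exact Finset.sum_pos' (fun l _ => mul_nonneg (h1 _ _) (hB _ _))
      ⟨c k, Finset.mem_univ _, mul_pos h2 (h k (by omega))⟩

theorem matExp_pos {N : ℕ} (A : Matrix (Fin N) (Fin N) ℝ)
    (hoff : ∀ i j, i ≠ j → 0 ≤ A i j) (hirr : MatrixIrreducible A)
    (t : ℝ) (ht : 0 < t) (i j : Fin N) : 0 < matExp (t • A) i j := by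
  set d : ℝ := ∑ i, |A i i| with hd
  have hdi : ∀ i, |A i i| ≤ d := fun i =>
    Finset.single_le_sum (f := fun i => |A i i|) (fun _ _ => abs_nonneg _) (Finset.mem_univ i)
  have hd0 : 0 ≤ d := Finset.sum_nonneg fun _ _ => abs_nonneg _
  set B : Matrix (Fin N) (Fin N) ℝ := t • A + Matrix.diagonal (fun _ => t * d) with hBdef
  have hBA : ∀ i j, t * A i j ≤ B i j := by
    intro i j
    simp only [hBdef, Matrix.add_apply, Matrix.smul_apply, smul_eq_mul, Matrix.diagonal_apply]
    split_ifs
    · nlinarith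
    · simp
  have hB : ∀ i j, 0 ≤ B i j := by
    intro i j
    by_cases hij : i = j
    · subst hij
      have := neg_abs_le (A i i)
      have := hdi i
      simp only [hBdef, Matrix.add_apply, Matrix.smul_apply, smul_eq_mul,
        Matrix.diagonal_apply_eq]
      nlinarith
    · exact le_trans (mul_nonneg ht.le (hoff i j hij)) (hBA i j)
  have hpos : 0 < NormedSpace.exp B i j := by
    by_cases hij : i = j
    · subst hij
      exact exp_ge_term B hB i i 0 (by simp)
    · obtain ⟨k, c, h0, hk, hc⟩ := hirr i j hij
      have := (chain_pow_pos B hB c k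
        fun l hl => lt_of_lt_of_le (mul_pos ht (hc l hl)) (hBA _ _)).2
      rw [h0, hk] at this
      exact exp_ge_term B hB i j k this
  have hcomm : Commute (t • A) (Matrix.diagonal (fun _ : Fin N => t * d)) := by
    rw [← Matrix.scalar_apply]
    exact (Matrix.scalar_commute _ (fun r => Commute.all _ r) _).symm
  rw [hBdef, Matrix.exp_add_of_commute _ _ hcomm, Matrix.exp_diagonal,
    Matrix.mul_diagonal, ← matExp_eq_exp, Pi.coe_exp, ← Real.exp_eq_exp_ℝ] at hpos
  exact pos_of_mul_pos_left hpos (Real.exp_pos _).le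

theorem stmt2 {N : ℕ} (hN : 2 ≤ N) (A : Matrix (Fin N) (Fin N) ℝ)
    (hoff : ∀ i j, i ≠ j → 0 ≤ A i j) (hirr : MatrixIrreducible A)
    (t : ℝ) (ht : 0 < t) (sA : ℝ)
    (hsA : IsGreatest (spectrumRe A) sA) :
    (∀ i j, 0 < matExp (t • A) i j) ∧
      IsGreatest (spectrumAbs (matExp (t • A))) (Real.exp (t * sA)) := by
  refine ⟨matExp_pos A hoff hirr t ht, ?_⟩
  have hu : IsUnit (t : ℂ) := by simpa using ht.ne'
  have hmap : (t • A).map Complex.ofReal = hu.unit • A.map Complex.ofReal := by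
    ext i j
    simp [Units.smul_def]
  have key : ∀ μ, μ ∈ spectrum ℂ ((matExp (t • A)).map Complex.ofReal) ↔
      ∃ γ ∈ spectrum ℂ (A.map Complex.ofReal), Complex.exp (t * γ) = μ := by
    intro μ
    rw [matExp_map, spectrum_exp_matrix, hmap, spectrum.unit_smul_eq_smul]
    simp [Set.mem_smul_set, Units.smul_def]
  have hnorm : ∀ γ : ℂ, ‖Complex.exp (t * γ)‖ = Real.exp (t * γ.re) := by
    intro γ; rw [Complex.norm_exp]; simp
  constructor
  · obtain ⟨γ, hγ, hre⟩ := hsA.1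
    exact ⟨_, (key _).2 ⟨γ, hγ, rfl⟩, by rw [hnorm, hre]⟩
  · rintro x ⟨μ, hμ, rfl⟩
    obtain ⟨γ, hγ, rfl⟩ := (key _).1 hμ
    rw [hnorm]
    exact Real.exp_le_exp.2 (mul_le_mul_of_nonneg_left (hsA.2 ⟨γ, hγ, rfl⟩) ht.le)
end

section
/- Let m ≥ 0, let Q^F = (q^F_{ij}) be an (m+1)×(m+1) real matrix with q^F_{ij} ≥ 0 for i ≠ j and Σ_{j} q^F_{ij} = 0 for every i, let β^F ∈ ℝ^{m+1}, and let H_{m+1} be the (m+1)×(m+1) upper-triangular matrix of ones (entries H_{ij} = 1 if i ≤ j and 0 otherwise). If the matrix A := −(Q^F + diag(β^F_1,…,β^F_{m+1})) H_{m+1} is a nonsingular M-matrix, then there exists a vector ξ^F ∈ ℝ^{m+1} with ξ^F_1 > ξ^F_2 > ⋯ > ξ^F_{m+1} > 0 such that ((Q^F + diag(β^F)) ξ^F)_i < 0 for every i ∈ {1,…,m+1}. -/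
/-- `A` is a nonsingular M-matrix: `A = s I - B` with `B` entrywise nonnegative
and `s` strictly greater than the spectral radius of `B` (i.e. every complex
eigenvalue of `B` has modulus `< s`). -/
def IsNonsingularMMatrix {k : ℕ} (A : Matrix (Fin k) (Fin k) ℝ) : Prop :=
  ∃ (s : ℝ) (B : Matrix (Fin k) (Fin k) ℝ),
    (∀ i j, 0 ≤ B i j) ∧ A = s • (1 : Matrix (Fin k) (Fin k) ℝ) - B ∧
    ∀ γ ∈ spectrum ℂ (B.map Complex.ofReal), ‖γ‖ < s

/-- The upper-triangular matrix of ones. -/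
def upperOnes (k : ℕ) : Matrix (Fin k) (Fin k) ℝ :=
  Matrix.of fun i j => if i ≤ j then (1 : ℝ) else 0

section aux
attribute [local instance] Matrix.linftyOpNormedRing Matrix.linftyOpNormedAlgebra

theorem aux_pow {m : ℕ} (s : ℝ) (B : Matrix (Fin (m+1)) (Fin (m+1)) ℝ)
    (hs : ∀ γ ∈ spectrum ℂ (B.map Complex.ofReal), ‖γ‖ < s) :
    0 < s ∧ ∃ n : ℕ, 0 < n ∧ ∀ i, ∑ j, (B ^ n) i j < s ^ n := by
  have : CompleteSpace (Matrix (Fin (m+1)) (Fin (m+1)) ℂ) := FiniteDimensional.complete ℂ _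
  set a := B.map Complex.ofReal with ha
  obtain ⟨γ, hγ⟩ := spectrum.nonempty a
  have hs0 : 0 < s := lt_of_le_of_lt (norm_nonneg γ) (hs γ hγ)
  refine ⟨hs0, ?_⟩
  lift s to NNReal using hs0.le
  have hr : spectralRadius ℂ a < s := by
    apply spectrum.spectralRadius_lt_of_forall_lt
    intro k hk
    exact_mod_cast hs k hk
  have ht := spectrum.pow_nnnorm_pow_one_div_tendsto_nhds_spectralRadius a
  obtain ⟨n, hn, hn0⟩ := ((ht.eventually (gt_mem_nhds hr)).and
    (Filter.eventually_gt_atTop 0)).exists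
  refine ⟨n, hn0, fun i => ?_⟩
  have hn1 : (‖a ^ n‖₊ : ENNReal) < (s : ENNReal) ^ n := by
    have h2 := ENNReal.pow_lt_pow_left hn0.ne' hn
    rw [← ENNReal.rpow_natCast, ← ENNReal.rpow_mul] at h2
    have : (n : ℝ) ≠ 0 := by positivity
    simpa [this] using h2
  have hn2 : ‖a ^ n‖₊ < s ^ n := by exact_mod_cast hn1
  have hmap : a ^ n = (B ^ n).map Complex.ofReal := by
    rw [ha]
    exact (Matrix.map_pow B Complex.ofRealHom n).symm
  have h3 : ∑ j, ‖(a ^ n) i j‖₊ ≤ ‖a ^ n‖₊ := by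
    rw [Matrix.linfty_opNNNorm_def]
    exact Finset.le_sup (f := fun i => ∑ j, ‖(a ^ n) i j‖₊) (Finset.mem_univ i)
  have h4 : ((∑ j, ‖(a ^ n) i j‖₊ : NNReal) : ℝ) < s ^ n := by
    exact_mod_cast h3.trans_lt hn2
  refine lt_of_le_of_lt ?_ h4
  push_cast
  refine Finset.sum_le_sum fun j _ => ?_
  rw [hmap]
  simpa using le_abs_self _

end aux

theorem aux_pow_nonneg {k : ℕ} (B : Matrix (Fin k) (Fin k) ℝ) (hB : ∀ i j, 0 ≤ B i j) (n : ℕ) :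
    ∀ i j, 0 ≤ (B ^ n) i j := by
  induction n with
  | zero => intro i j; rw [pow_zero, Matrix.one_apply]; split_ifs <;> norm_num
  | succ n ih =>
    intro i j
    rw [pow_succ, Matrix.mul_apply]
    exact Finset.sum_nonneg fun l _ => mul_nonneg (ih i l) (hB l j)

theorem aux_one {k : ℕ} (M : Matrix (Fin k) (Fin k) ℝ) (i : Fin k) :
    M.mulVec 1 i = ∑ j, M i j := by
  simp [Matrix.mulVec, dotProduct]

theorem aux_eta {m : ℕ} (A : Matrix (Fin (m+1)) (Fin (m+1)) ℝ) (hA : IsNonsingularMMatrix A) :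
    ∃ η : Fin (m+1) → ℝ, (∀ i, 0 < η i) ∧ ∀ i, 0 < A.mulVec η i := by
  obtain ⟨s, B, hB, rfl, hs⟩ := hA
  obtain ⟨hs0, n, hn, hrow⟩ := aux_pow s B hs
  set S : Matrix (Fin (m+1)) (Fin (m+1)) ℝ := s • 1 with hS
  have hc : Commute B S := (Commute.one_right B).smul_right s
  have hSp : ∀ k, S ^ k = s ^ k • 1 := fun k => by rw [hS, smul_pow, one_pow]
  have hg := hc.symm.mul_geom_sum₂ n
  refine ⟨(∑ i ∈ Finset.range n, S ^ i * B ^ (n - 1 - i)).mulVec 1, fun i => ?_, fun i => ?_⟩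
  · simp only [aux_one, Matrix.sum_apply, hSp, smul_mul_assoc, one_mul,
      Matrix.smul_apply, smul_eq_mul]
    have hnn : ∀ k, ∀ j, 0 ≤ s ^ k * (B ^ (n - 1 - k)) i j := fun k j =>
      mul_nonneg (pow_nonneg hs0.le _) (aux_pow_nonneg B hB _ i j)
    refine Finset.sum_pos' (fun j _ => Finset.sum_nonneg fun k _ => hnn k j)
      ⟨i, Finset.mem_univ i, Finset.sum_pos' (fun k _ => hnn k i)
        ⟨n - 1, Finset.mem_range.2 (by omega), ?_⟩⟩
    simp only [Nat.sub_self, pow_zero, Matrix.one_apply_eq, mul_one]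
    exact pow_pos hs0 _
  · rw [Matrix.mulVec_mulVec, hg, hSp]
    have := hrow i
    simp only [aux_one, Matrix.sub_apply, Matrix.smul_apply, smul_eq_mul,
      Finset.sum_sub_distrib, ← Finset.mul_sum, Matrix.one_apply, Finset.sum_ite_eq,
      Finset.mem_univ, if_true, mul_one]
    linarith

theorem stmt17 {m : ℕ}
    (QF : Matrix (Fin (m + 1)) (Fin (m + 1)) ℝ)
    (hoff : ∀ i j, i ≠ j → 0 ≤ QF i j) (hrow : ∀ i, ∑ j, QF i j = 0)
    (βF : Fin (m + 1) → ℝ)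
    (hM : IsNonsingularMMatrix (-((QF + Matrix.diagonal βF) * upperOnes (m + 1)))) :
    ∃ ξF : Fin (m + 1) → ℝ, StrictAnti ξF ∧ 0 < ξF (Fin.last m) ∧
      ∀ i, (QF + Matrix.diagonal βF).mulVec ξF i < 0 := by
  obtain ⟨η, h0, h1⟩ := aux_eta _ hM
  have hu : ∀ i, (upperOnes (m + 1)).mulVec η i = ∑ j, if i ≤ j then η j else 0 := by
    intro i
    simp [upperOnes, Matrix.mulVec, dotProduct]
  refine ⟨(upperOnes (m + 1)).mulVec η, ?_, ?_, fun i => ?_⟩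
  · intro i j hij
    rw [hu, hu]
    refine Finset.sum_lt_sum (fun k _ => ?_) ⟨i, Finset.mem_univ i, ?_⟩
    · have := h0 k
      by_cases h : j ≤ k
      · rw [if_pos h, if_pos (hij.le.trans h)]
      · rw [if_neg h]; split_ifs <;> linarith
    · rw [if_neg (not_le.2 hij), if_pos le_rfl]; exact h0 i
  · rw [hu]
    refine Finset.sum_pos' (fun k _ => ?_) ⟨Fin.last m, Finset.mem_univ _, ?_⟩
    · have := h0 k
      split_ifs <;> linarith
    · rw [if_pos le_rfl]; exact h0 _
  · have := h1 i
    rw [Matrix.neg_mulVec, Pi.neg_apply] at this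
    rw [Matrix.mulVec_mulVec]
    linarith
end
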